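/- (Combined (max,+)/(min,+) model of P-time event graphs.) Let A, B, C be n×n matrices over the extended reals ℝ̄, and define 𝒜 = B* ⊗ A ⊗ B* and ℬ = (B^♯)_* ⊗' C ⊗' (B^♯)_*. Let x : ℕ → ℝ̄^n be a sequence with x(0) = B* ⊗ x(0). Then the following are equivalent: (a) for all k ≥ 1, A ⊗ x(k-1) ⊕ B ⊗ x(k) ≤ x(k) and x(k) ≤ B^♯ ⊗' x(k) ⊕' C ⊗' x(k-1); (b) for all k ≥ 1, 𝒜 ⊗ x(k-1) ≤ x(k) ≤ ℬ ⊗' x(k-1), and for all k ≥ 0, x(k) = B* ⊗ x(k). -/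

import Mathlib

/-!
In `EReal`, where `⊥` absorbs under `+`, each translation `b + ·` is residuated, with no finiteness
assumption. Hence `+` distributes over all suprema, the max-plus product acts associatively on
vectors, and `B ⊗ ·` has the right adjoint `B^♯ ⊗' ·`. In particular the three conditions
`B ⊗ v ≤ v`, `v ≤ B^♯ ⊗' v` and `v = B* ⊗ v` are equivalent.

If `u` and `v` both satisfy them, then `B* ⊗ A ⊗ B* ⊗ u = B* ⊗ A ⊗ u` lies below `v` exactly when
`A ⊗ u` does, since `B*` is extensive, monotone and fixes `v`. Negation exchanges the max-plus and
min-plus structures, which gives the dual statement for the upper bound.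
-/

noncomputable section

/-- Max-plus matrix product over the extended reals (`-∞` is absorbing for `+` in `EReal`). -/
def mpMul {m n p : ℕ} (A : Matrix (Fin m) (Fin n) EReal) (B : Matrix (Fin n) (Fin p) EReal) :
    Matrix (Fin m) (Fin p) EReal :=
  fun i j => ⨆ k, A i k + B k j

/-- Max-plus matrix-vector product. -/
def mpMulVec {m n : ℕ} (A : Matrix (Fin m) (Fin n) EReal) (x : Fin n → EReal) :
    Fin m → EReal :=
  fun i => ⨆ k, A i k + x k

/-- Min-plus addition on `EReal`: `+∞` is absorbing. -/
def mnAdd (a b : EReal) : EReal := -((-a) + (-b))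

/-- Min-plus matrix product. -/
def mnMul {m n p : ℕ} (A : Matrix (Fin m) (Fin n) EReal) (B : Matrix (Fin n) (Fin p) EReal) :
    Matrix (Fin m) (Fin p) EReal :=
  fun i j => ⨅ k, mnAdd (A i k) (B k j)

/-- Min-plus matrix-vector product. -/
def mnMulVec {m n : ℕ} (A : Matrix (Fin m) (Fin n) EReal) (x : Fin n → EReal) :
    Fin m → EReal :=
  fun i => ⨅ k, mnAdd (A i k) (x k)

/-- Conjugate matrix: `(conj A) i j = -(A j i)`. -/
def conjM {m n : ℕ} (A : Matrix (Fin m) (Fin n) EReal) : Matrix (Fin n) (Fin m) EReal :=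
  fun i j => -(A j i)

/-- Max-plus identity matrix. -/
def mpId (n : ℕ) : Matrix (Fin n) (Fin n) EReal :=
  fun i j => if i = j then 0 else ⊥

/-- Min-plus identity matrix. -/
def mnId (n : ℕ) : Matrix (Fin n) (Fin n) EReal :=
  fun i j => if i = j then 0 else ⊤

/-- Max-plus matrix powers. -/
def mpPow {n : ℕ} (A : Matrix (Fin n) (Fin n) EReal) : ℕ → Matrix (Fin n) (Fin n) EReal
  | 0 => mpId n
  | k + 1 => mpMul A (mpPow A k)

/-- Min-plus matrix powers. -/
def mnPow {n : ℕ} (A : Matrix (Fin n) (Fin n) EReal) : ℕ → Matrix (Fin n) (Fin n) EReal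
  | 0 => mnId n
  | k + 1 => mnMul A (mnPow A k)

/-- Max-plus Kleene star: entrywise supremum of all max-plus powers. -/
def mpStar {n : ℕ} (A : Matrix (Fin n) (Fin n) EReal) : Matrix (Fin n) (Fin n) EReal :=
  fun i j => ⨆ k, mpPow A k i j

/-- Min-plus star: entrywise infimum of all min-plus powers. -/
def mnStar {n : ℕ} (A : Matrix (Fin n) (Fin n) EReal) : Matrix (Fin n) (Fin n) EReal :=
  fun i j => ⨅ k, mnPow A k i j

/-- Entrywise maximum of two matrices (`A ⊕ B`). -/
def mSup {m n : ℕ} (A B : Matrix (Fin m) (Fin n) EReal) : Matrix (Fin m) (Fin n) EReal :=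
  fun i j => A i j ⊔ B i j

lemma gc_add_mnAdd_neg (b : EReal) : GaloisConnection (b + ·) (mnAdd (-b)) := by
  intro a c
  simp only [mnAdd, neg_neg]
  induction a <;> induction b <;> induction c
  case coe.coe.coe a b c =>
    norm_cast
    rw [neg_add_rev, neg_neg, ← sub_eq_add_neg, le_sub_iff_add_le']
  all_goals simp

lemma ereal_add_iSup {ι : Sort*} (b : EReal) (f : ι → EReal) : b + ⨆ i, f i = ⨆ i, b + f i :=
  (gc_add_mnAdd_neg b).l_iSup

lemma ereal_iSup_add {ι : Sort*} (f : ι → EReal) (b : EReal) : (⨆ i, f i) + b = ⨆ i, f i + b := by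
  simp only [add_comm _ b, ereal_add_iSup]

lemma gc_mpMulVec_mnMulVec_conjM {m n : ℕ} (A : Matrix (Fin m) (Fin n) EReal) :
    GaloisConnection (mpMulVec A) (mnMulVec (conjM A)) := by
  intro u v
  simp only [Pi.le_def, mpMulVec, mnMulVec, conjM, iSup_le_iff, le_iInf_iff]
  rw [forall_comm]
  exact forall₂_congr fun k i => gc_add_mnAdd_neg (A i k) (u k) (v i)

section MaxPlusStar

variable {m n p : ℕ}

lemma mpMulVec_mpMul (A : Matrix (Fin m) (Fin n) EReal) (B : Matrix (Fin n) (Fin p) EReal)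
    (u : Fin p → EReal) : mpMulVec (mpMul A B) u = mpMulVec A (mpMulVec B u) := by
  funext i
  simp only [mpMulVec, mpMul, ereal_iSup_add, ereal_add_iSup, add_assoc]
  exact iSup_comm

lemma mpMulVec_mpId (u : Fin n → EReal) : mpMulVec (mpId n) u = u := by
  funext i
  have summand (k : Fin n) : mpId n i k + u k = ⨆ _ : k = i, u k := by
    by_cases h : i = k <;> simp [mpId, h, eq_comm]
  simp only [mpMulVec, summand, iSup_iSup_eq_left]

lemma mpMulVec_mpStar (B : Matrix (Fin n) (Fin n) EReal) (u : Fin n → EReal) :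
    mpMulVec (mpStar B) u = ⨆ k, mpMulVec (mpPow B k) u := by
  funext i
  simp only [iSup_apply, mpMulVec, mpStar, ereal_iSup_add]
  exact iSup_comm

lemma mpMulVec_mpPow_le_mpMulVec_mpStar (B : Matrix (Fin n) (Fin n) EReal) (k : ℕ)
    (u : Fin n → EReal) : mpMulVec (mpPow B k) u ≤ mpMulVec (mpStar B) u := by
  rw [mpMulVec_mpStar]
  exact le_iSup (fun k => mpMulVec (mpPow B k) u) k

lemma le_mpMulVec_mpStar (B : Matrix (Fin n) (Fin n) EReal) (u : Fin n → EReal) :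
    u ≤ mpMulVec (mpStar B) u := by
  simpa only [mpPow, mpMulVec_mpId] using mpMulVec_mpPow_le_mpMulVec_mpStar B 0 u

lemma mpMulVec_le_mpMulVec_mpStar (B : Matrix (Fin n) (Fin n) EReal) (u : Fin n → EReal) :
    mpMulVec B u ≤ mpMulVec (mpStar B) u := by
  simpa only [mpPow, mpMulVec_mpMul, mpMulVec_mpId] using mpMulVec_mpPow_le_mpMulVec_mpStar B 1 u

lemma mpMulVec_mpPow_le {B : Matrix (Fin n) (Fin n) EReal} {u : Fin n → EReal}
    (hu : mpMulVec B u ≤ u) (k : ℕ) : mpMulVec (mpPow B k) u ≤ u := by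
  induction k with
  | zero => exact (mpMulVec_mpId u).le
  | succ k ih =>
    calc mpMulVec (mpPow B (k + 1)) u
        = mpMulVec B (mpMulVec (mpPow B k) u) := mpMulVec_mpMul B (mpPow B k) u
      _ ≤ mpMulVec B u := (gc_mpMulVec_mnMulVec_conjM B).monotone_l ih
      _ ≤ u := hu

lemma eq_mpMulVec_mpStar_iff {B : Matrix (Fin n) (Fin n) EReal} {u : Fin n → EReal} :
    u = mpMulVec (mpStar B) u ↔ mpMulVec B u ≤ u := by
  refine ⟨fun h => (mpMulVec_le_mpMulVec_mpStar B u).trans h.ge, fun h => ?_⟩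
  refine le_antisymm (le_mpMulVec_mpStar B u) ?_
  rw [mpMulVec_mpStar]
  exact iSup_le (mpMulVec_mpPow_le h)

lemma mpMulVec_mpStar_le_iff {B : Matrix (Fin n) (Fin n) EReal} {u v : Fin n → EReal}
    (hv : mpMulVec B v ≤ v) : mpMulVec (mpStar B) u ≤ v ↔ u ≤ v := by
  refine ⟨(le_mpMulVec_mpStar B u).trans, fun h => ?_⟩
  calc mpMulVec (mpStar B) u
      ≤ mpMulVec (mpStar B) v := (gc_mpMulVec_mnMulVec_conjM (mpStar B)).monotone_l h
    _ = v := (eq_mpMulVec_mpStar_iff.2 hv).symm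

lemma mpMulVec_mpStar_mul_mpStar_le_iff (A : Matrix (Fin m) (Fin n) EReal)
    {B : Matrix (Fin m) (Fin m) EReal} {D : Matrix (Fin n) (Fin n) EReal}
    {u : Fin n → EReal} {v : Fin m → EReal} (hu : mpMulVec D u ≤ u) (hv : mpMulVec B v ≤ v) :
    mpMulVec (mpMul (mpMul (mpStar B) A) (mpStar D)) u ≤ v ↔ mpMulVec A u ≤ v := by
  rw [mpMulVec_mpMul, mpMulVec_mpMul, ← eq_mpMulVec_mpStar_iff.2 hu, mpMulVec_mpStar_le_iff hv]

end MaxPlusStar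

section MinPlusDuality

variable {m n p : ℕ}

lemma ereal_neg_iInf {ι : Sort*} (f : ι → EReal) : -(⨅ i, f i) = ⨆ i, -f i :=
  EReal.negOrderIso.map_iInf f

lemma neg_mnMulVec (A : Matrix (Fin m) (Fin n) EReal) (u : Fin n → EReal) :
    -mnMulVec A u = mpMulVec (-A) (-u) := by
  funext i
  simp only [Pi.neg_apply, Matrix.neg_apply, mnMulVec, mpMulVec, mnAdd, ereal_neg_iInf, neg_neg]

lemma neg_mnMul (A : Matrix (Fin m) (Fin n) EReal) (B : Matrix (Fin n) (Fin p) EReal) :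
    -mnMul A B = mpMul (-A) (-B) := by
  ext i j
  simp only [Matrix.neg_apply, mnMul, mpMul, mnAdd, ereal_neg_iInf, neg_neg]

lemma neg_mnId : -mnId n = mpId n := by
  ext i j
  by_cases h : i = j <;> simp [mnId, mpId, h]

lemma neg_mnPow (A : Matrix (Fin n) (Fin n) EReal) (k : ℕ) : -mnPow A k = mpPow (-A) k := by
  induction k with
  | zero => exact neg_mnId
  | succ k ih => rw [mnPow, mpPow, neg_mnMul, ih]

lemma neg_mnStar (A : Matrix (Fin n) (Fin n) EReal) : -mnStar A = mpStar (-A) := by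
  ext i j
  simp only [mpStar, ← neg_mnPow, Matrix.neg_apply, mnStar, ereal_neg_iInf]

lemma le_mnMulVec_iff {A : Matrix (Fin m) (Fin n) EReal} {u : Fin n → EReal} {v : Fin m → EReal} :
    v ≤ mnMulVec A u ↔ mpMulVec (-A) (-u) ≤ -v := by
  rw [← neg_mnMulVec]
  exact forall_congr' fun _ => EReal.neg_le_neg_iff.symm

lemma le_mnMulVec_mnStar_mul_mnStar_iff (A : Matrix (Fin m) (Fin n) EReal)
    {B : Matrix (Fin m) (Fin m) EReal} {D : Matrix (Fin n) (Fin n) EReal}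
    {u : Fin n → EReal} {v : Fin m → EReal} (hu : u ≤ mnMulVec D u) (hv : v ≤ mnMulVec B v) :
    v ≤ mnMulVec (mnMul (mnMul (mnStar B) A) (mnStar D)) u ↔ v ≤ mnMulVec A u := by
  rw [le_mnMulVec_iff] at hu hv
  rw [le_mnMulVec_iff, le_mnMulVec_iff, neg_mnMul, neg_mnMul, neg_mnStar, neg_mnStar]
  exact mpMulVec_mpStar_mul_mpStar_le_iff (-A) hu hv

end MinPlusDuality

lemma implicit_bounds_iff_explicit_bounds {m n : ℕ} (A C : Matrix (Fin m) (Fin n) EReal)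
    {B : Matrix (Fin m) (Fin m) EReal} {D : Matrix (Fin n) (Fin n) EReal}
    {u : Fin n → EReal} {v : Fin m → EReal} (hu : mpMulVec D u ≤ u) (hv : mpMulVec B v ≤ v) :
    (mpMulVec A u ⊔ mpMulVec B v ≤ v ∧ v ≤ mnMulVec (conjM B) v ⊓ mnMulVec C u) ↔
      mpMulVec (mpMul (mpMul (mpStar B) A) (mpStar D)) u ≤ v ∧
        v ≤ mnMulVec (mnMul (mnMul (mnStar (conjM B)) C) (mnStar (conjM D))) u := by
  have hu_conj : u ≤ mnMulVec (conjM D) u := (gc_mpMulVec_mnMulVec_conjM D).le_u hu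
  have hv_conj : v ≤ mnMulVec (conjM B) v := (gc_mpMulVec_mnMulVec_conjM B).le_u hv
  rw [mpMulVec_mpStar_mul_mpStar_le_iff A hu hv,
    le_mnMulVec_mnStar_mul_mnStar_iff C hu_conj hv_conj,
    sup_le_iff, le_inf_iff, and_iff_left hv, and_iff_right hv_conj]

/-- combined (max,+)/(min,+) model of P-time event graphs. -/
theorem combined_model {n : ℕ} (A B C : Matrix (Fin n) (Fin n) EReal)
    (x : ℕ → Fin n → EReal)
    (hx0 : x 0 = mpMulVec (mpStar B) (x 0)) :
    (∀ k : ℕ, 1 ≤ k →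
        mpMulVec A (x (k - 1)) ⊔ mpMulVec B (x k) ≤ x k ∧
        x k ≤ mnMulVec (conjM B) (x k) ⊓ mnMulVec C (x (k - 1))) ↔
      ((∀ k : ℕ, 1 ≤ k →
          mpMulVec (mpMul (mpMul (mpStar B) A) (mpStar B)) (x (k - 1)) ≤ x k ∧
          x k ≤ mnMulVec (mnMul (mnMul (mnStar (conjM B)) C) (mnStar (conjM B))) (x (k - 1))) ∧
        ∀ k : ℕ, x k = mpMulVec (mpStar B) (x k)) := by
  simp only [eq_mpMulVec_mpStar_iff] at hx0 ⊢
  constructor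
  · intro h
    have hB (k : ℕ) : mpMulVec B (x k) ≤ x k := by
      rcases Nat.eq_zero_or_pos k with rfl | hk
      · exact hx0
      · exact le_sup_right.trans (h k hk).1
    exact ⟨fun k hk => (implicit_bounds_iff_explicit_bounds A C (hB _) (hB k)).1 (h k hk), hB⟩
  · rintro ⟨h, hB⟩ k hk
    exact (implicit_bounds_iff_explicit_bounds A C (hB _) (hB k)).2 (h k hk)
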